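/- arXiv:1707.05389 — 3 statements merged into one kernel-verified Lean document; each statement's English description precedes it below -/
import Mathlib

section
/- Let h : ℝ² → ℝ be any smooth function. Let u : ℝ² → ℝ be a smooth function of (t,x), set m = u − u_xx, and suppose that at every point m_t + 2 u_x h(u,u_x) m + u ∂_x( h(u,u_x) m ) = 0 (equivalently, m_t + u_x h(u,u_x) m + ∂_x( u h(u,u_x) m ) = 0). Then at every point ∂_t( u² + u_x² ) + ∂_x( 2 u² h(u,u_x) m − 2 u u_tx ) = 0; that is, the H¹ density u² + u_x² satisfies a local conservation law for this whole family of equations. -/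
open Real

noncomputable section

/-- Partial derivative in the first (time) variable. -/
def pt (f : ℝ → ℝ → ℝ) (t x : ℝ) : ℝ := deriv (fun s => f s x) t

/-- Partial derivative in the second (space) variable. -/
def px (f : ℝ → ℝ → ℝ) (t x : ℝ) : ℝ := deriv (fun y => f t y) x

/-- The momentum variable `m = u - u_xx`. -/
def mf (u : ℝ → ℝ → ℝ) (t x : ℝ) : ℝ := u t x - px (px u) t x

theorem px_eq (f : ℝ → ℝ → ℝ) (hf : ContDiff ℝ (⊤ : ℕ∞) (Function.uncurry f)) (t x : ℝ) :
    HasDerivAt (fun y => f t y) (fderiv ℝ (Function.uncurry f) (t, x) (0, 1)) x := by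
  have h1 : HasFDerivAt (Function.uncurry f) (fderiv ℝ (Function.uncurry f) (t, x)) (t, x) :=
    ((hf.differentiable (by simp)) (t, x)).hasFDerivAt
  have h2 : HasDerivAt (fun y : ℝ => (t, y)) ((0 : ℝ), (1 : ℝ)) x :=
    (hasDerivAt_const x t).prodMk (hasDerivAt_id x)
  exact h1.comp_hasDerivAt x h2

theorem pt_eq (f : ℝ → ℝ → ℝ) (hf : ContDiff ℝ (⊤ : ℕ∞) (Function.uncurry f)) (t x : ℝ) :
    HasDerivAt (fun s => f s x) (fderiv ℝ (Function.uncurry f) (t, x) (1, 0)) t := by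
  have h1 : HasFDerivAt (Function.uncurry f) (fderiv ℝ (Function.uncurry f) (t, x)) (t, x) :=
    ((hf.differentiable (by simp)) (t, x)).hasFDerivAt
  have h2 : HasDerivAt (fun s : ℝ => (s, x)) ((1 : ℝ), (0 : ℝ)) t :=
    (hasDerivAt_id t).prodMk (hasDerivAt_const t x)
  exact h1.comp_hasDerivAt t h2

theorem px_fun (f : ℝ → ℝ → ℝ) (hf : ContDiff ℝ (⊤ : ℕ∞) (Function.uncurry f)) :
    Function.uncurry (px f) = fun p => fderiv ℝ (Function.uncurry f) p (0, 1) := by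
  funext ⟨t, x⟩
  exact (px_eq f hf t x).deriv

theorem pt_fun (f : ℝ → ℝ → ℝ) (hf : ContDiff ℝ (⊤ : ℕ∞) (Function.uncurry f)) :
    Function.uncurry (pt f) = fun p => fderiv ℝ (Function.uncurry f) p (1, 0) := by
  funext ⟨t, x⟩
  exact (pt_eq f hf t x).deriv

theorem px_smooth (f : ℝ → ℝ → ℝ) (hf : ContDiff ℝ (⊤ : ℕ∞) (Function.uncurry f)) :
    ContDiff ℝ (⊤ : ℕ∞) (Function.uncurry (px f)) := by
  rw [px_fun f hf]
  exact (hf.fderiv_right (m := (⊤ : ℕ∞)) (by simp)).clm_apply contDiff_const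

theorem pt_smooth (f : ℝ → ℝ → ℝ) (hf : ContDiff ℝ (⊤ : ℕ∞) (Function.uncurry f)) :
    ContDiff ℝ (⊤ : ℕ∞) (Function.uncurry (pt f)) := by
  rw [pt_fun f hf]
  exact (hf.fderiv_right (m := (⊤ : ℕ∞)) (by simp)).clm_apply contDiff_const

theorem px_has (f : ℝ → ℝ → ℝ) (hf : ContDiff ℝ (⊤ : ℕ∞) (Function.uncurry f)) (t x : ℝ) :
    HasDerivAt (fun y => f t y) (px f t x) x :=
  (px_eq f hf t x).differentiableAt.hasDerivAt

theorem pt_has (f : ℝ → ℝ → ℝ) (hf : ContDiff ℝ (⊤ : ℕ∞) (Function.uncurry f)) (t x : ℝ) :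
    HasDerivAt (fun s => f s x) (pt f t x) t :=
  (pt_eq f hf t x).differentiableAt.hasDerivAt

theorem px_pt_comm (f : ℝ → ℝ → ℝ) (hf : ContDiff ℝ (⊤ : ℕ∞) (Function.uncurry f)) (t x : ℝ) :
    px (pt f) t x = pt (px f) t x := by
  have hd : DifferentiableAt ℝ (fderiv ℝ (Function.uncurry f)) (t, x) :=
    ((hf.fderiv_right (m := (⊤ : ℕ∞)) (by simp)).differentiable (by simp)) (t, x)
  have e1 : px (pt f) t x = _ := (px_eq (pt f) (pt_smooth f hf) t x).deriv
  have e2 : pt (px f) t x = _ := (pt_eq (px f) (px_smooth f hf) t x).deriv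
  have hs : IsSymmSndFDerivAt ℝ (Function.uncurry f) (t, x) :=
    (hf.contDiffAt).isSymmSndFDerivAt (by simp; exact WithTop.coe_le_coe.2 (le_top (a := (2 : ℕ∞))))
  rw [e1, e2, pt_fun f hf, px_fun f hf, fderiv_clm_apply hd (by fun_prop),
    fderiv_clm_apply hd (by fun_prop)]
  simpa using hs.eq (0, 1) (1, 0)

/-- the H¹ density is conserved for the family
`m_t + 2 u_x h(u,u_x) m + u ∂_x(h(u,u_x) m) = 0`. -/
theorem H1_conservation_family
    (h : ℝ → ℝ → ℝ) (hh : ContDiff ℝ (⊤ : ℕ∞) (Function.uncurry h))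
    (u : ℝ → ℝ → ℝ) (hu : ContDiff ℝ (⊤ : ℕ∞) (Function.uncurry u))
    (heq : ∀ t x : ℝ,
      pt (mf u) t x
        + 2 * px u t x * h (u t x) (px u t x) * mf u t x
        + u t x * px (fun t' x' => h (u t' x') (px u t' x') * mf u t' x') t x = 0) :
    ∀ t x : ℝ,
      pt (fun t' x' => (u t' x')^2 + (px u t' x')^2) t x
        + px (fun t' x' =>
            2 * (u t' x')^2 * h (u t' x') (px u t' x') * mf u t' x'
              - 2 * u t' x' * pt (px u) t' x') t x = 0 := by
  intro t x
  have h1 := px_smooth u hu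
  have h2 := px_smooth _ h1
  have hm : ContDiff ℝ (⊤ : ℕ∞) (Function.uncurry (mf u)) := hu.sub h2
  have hhm : ContDiff ℝ (⊤ : ℕ∞)
      (Function.uncurry (fun t' x' => h (u t' x') (px u t' x') * mf u t' x')) :=
    (hh.comp (hu.prodMk h1)).mul hm
  have A : pt (mf u) t x = pt u t x - pt (px (px u)) t x :=
    ((pt_has u hu t x).sub (pt_has _ h2 t x)).deriv
  have B : pt (fun t' x' => (u t' x')^2 + (px u t' x')^2) t x = _ :=
    (((pt_has u hu t x).pow 2).add ((pt_has _ h1 t x).pow 2)).deriv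
  have C := ((((px_has u hu t x).pow 2).const_mul 2).mul (px_has _ hhm t x)).sub
    (((px_has u hu t x).const_mul 2).mul (px_has _ (pt_smooth _ h1) t x))
  have F : (fun y => 2 * (u t y)^2 * h (u t y) (px u t y) * mf u t y
      - 2 * u t y * pt (px u) t y) =
      (((fun y => 2 * ((fun y => u t y) ^ 2) y) * fun y => h (u t y) (px u t y) * mf u t y) -
      (fun y => 2 * u t y) * fun y => pt (px u) t y) := by
    funext y
    simp [mul_assoc]
  rw [← F] at C
  have D : px (fun t' x' =>
            2 * (u t' x')^2 * h (u t' x') (px u t' x') * mf u t' x'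
              - 2 * u t' x' * pt (px u) t' x') t x = _ := C.deriv
  rw [B, D, px_pt_comm _ h1]
  have E := heq t x
  rw [A] at E
  simp only [Pi.pow_apply]
  push_cast
  linear_combination 2 * u t x * E

end
end

section
/- Let α, β, μ ∈ ℝ. Let u : ℝ² → ℝ be a smooth function of (t,x) with u(t,x) + β ≠ 0 at every point, set m = u − u_xx, and suppose that at every point m_t + ( α u_x/(u+β)³ ) m + ∂_x( ( α/(u+β)² ) m ) = 0. Then at every point ∂_t( u_xx² + μ u_x² + (μ−1) u² + 2(μ−2)β u ) + ∂_x[ 2( (1−μ)u − (μ−2)β ) u_tx − 2 u_x u_t + α( m² + 2(μ−2)(u+β) m − (μ−2)(u+β)² )/(u+β)² ] = 0; that is, the gradient-energy density u_xx² + μ u_x² + (μ−1) u² + 2(μ−2)β u satisfies a local conservation law. -/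
open Real

noncomputable section

lemma aux_hasT {f : ℝ → ℝ → ℝ} (hf : ContDiff ℝ (⊤ : ℕ∞) (Function.uncurry f)) (t x : ℝ) :
    HasDerivAt (fun s => f s x) (fderiv ℝ (Function.uncurry f) (t, x) (1, 0)) t := by
  have h1 : HasFDerivAt (Function.uncurry f) (fderiv ℝ (Function.uncurry f) (t, x)) (t, x) :=
    (hf.differentiable (by simp) (t, x)).hasFDerivAt
  have h2 : HasDerivAt (fun s : ℝ => (s, x)) ((1 : ℝ), (0 : ℝ)) t :=
    (hasDerivAt_id t).prodMk (hasDerivAt_const t x)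
  exact h1.comp_hasDerivAt t h2

lemma aux_hasX {f : ℝ → ℝ → ℝ} (hf : ContDiff ℝ (⊤ : ℕ∞) (Function.uncurry f)) (t x : ℝ) :
    HasDerivAt (fun y => f t y) (fderiv ℝ (Function.uncurry f) (t, x) (0, 1)) x := by
  have h1 : HasFDerivAt (Function.uncurry f) (fderiv ℝ (Function.uncurry f) (t, x)) (t, x) :=
    (hf.differentiable (by simp) (t, x)).hasFDerivAt
  have h2 : HasDerivAt (fun s : ℝ => (t, s)) ((0 : ℝ), (1 : ℝ)) x :=
    (hasDerivAt_const x t).prodMk (hasDerivAt_id x)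
  exact h1.comp_hasDerivAt x h2

lemma aux_pt_eq {f : ℝ → ℝ → ℝ} (hf : ContDiff ℝ (⊤ : ℕ∞) (Function.uncurry f)) :
    Function.uncurry (pt f) = fun z => fderiv ℝ (Function.uncurry f) z (1, 0) := by
  funext ⟨t, x⟩
  exact (aux_hasT hf t x).deriv

lemma aux_px_eq {f : ℝ → ℝ → ℝ} (hf : ContDiff ℝ (⊤ : ℕ∞) (Function.uncurry f)) :
    Function.uncurry (px f) = fun z => fderiv ℝ (Function.uncurry f) z (0, 1) := by
  funext ⟨t, x⟩
  exact (aux_hasX hf t x).deriv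

lemma aux_fd {F : ℝ × ℝ → ℝ} (hf : ContDiff ℝ (⊤ : ℕ∞) F) :
    ContDiff ℝ (⊤ : ℕ∞) (fderiv ℝ F) := hf.fderiv_right (by simp)

lemma aux_pt_smooth {f : ℝ → ℝ → ℝ} (hf : ContDiff ℝ (⊤ : ℕ∞) (Function.uncurry f)) :
    ContDiff ℝ (⊤ : ℕ∞) (Function.uncurry (pt f)) := by
  rw [aux_pt_eq hf]
  exact (aux_fd hf).clm_apply contDiff_const

lemma aux_px_smooth {f : ℝ → ℝ → ℝ} (hf : ContDiff ℝ (⊤ : ℕ∞) (Function.uncurry f)) :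
    ContDiff ℝ (⊤ : ℕ∞) (Function.uncurry (px f)) := by
  rw [aux_px_eq hf]
  exact (aux_fd hf).clm_apply contDiff_const

lemma aux_dT {f : ℝ → ℝ → ℝ} (hf : ContDiff ℝ (⊤ : ℕ∞) (Function.uncurry f)) (t x : ℝ) :
    HasDerivAt (fun s => f s x) (pt f t x) t := (aux_hasT hf t x).differentiableAt.hasDerivAt

lemma aux_dX {f : ℝ → ℝ → ℝ} (hf : ContDiff ℝ (⊤ : ℕ∞) (Function.uncurry f)) (t x : ℝ) :
    HasDerivAt (fun y => f t y) (px f t x) x := (aux_hasX hf t x).differentiableAt.hasDerivAt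

lemma aux_comm {f : ℝ → ℝ → ℝ} (hf : ContDiff ℝ (⊤ : ℕ∞) (Function.uncurry f)) :
    px (pt f) = pt (px f) := by
  funext t x
  have e1 : px (pt f) t x = _ := (aux_hasX (aux_pt_smooth hf) t x).deriv
  have e2 : pt (px f) t x = _ := (aux_hasT (aux_px_smooth hf) t x).deriv
  have hd : DifferentiableAt ℝ (fderiv ℝ (Function.uncurry f)) (t, x) :=
    (aux_fd hf).differentiable (by simp) (t, x)
  have hs : IsSymmSndFDerivAt ℝ (Function.uncurry f) (t, x) :=
    hf.contDiffAt.isSymmSndFDerivAt (by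
      rw [minSmoothness_of_isRCLikeNormedField]
      exact WithTop.coe_le_coe.2 (le_top : (2 : ℕ∞) ≤ ⊤))
  rw [e1, e2, aux_pt_eq hf, aux_px_eq hf, fderiv_clm_apply hd (by fun_prop),
    fderiv_clm_apply hd (by fun_prop)]
  simpa using hs (0, 1) (1, 0)

/-- gradient-energy conservation law for the family
`m_t + (α u_x/(u+β)³) m + ∂_x((α/(u+β)²) m) = 0`. -/
theorem gradient_energy_conservation_singular_family
    (α β μ : ℝ)
    (u : ℝ → ℝ → ℝ) (hu : ContDiff ℝ (⊤ : ℕ∞) (Function.uncurry u))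
    (hne : ∀ t x : ℝ, u t x + β ≠ 0)
    (heq : ∀ t x : ℝ,
      pt (mf u) t x
        + (α * px u t x / (u t x + β)^3) * mf u t x
        + px (fun t' x' => (α / (u t' x' + β)^2) * mf u t' x') t x = 0) :
    ∀ t x : ℝ,
      pt (fun t' x' =>
          (px (px u) t' x')^2 + μ * (px u t' x')^2 + (μ - 1) * (u t' x')^2
            + 2 * (μ - 2) * β * u t' x') t x
        + px (fun t' x' =>
            2 * ((1 - μ) * u t' x' - (μ - 2) * β) * pt (px u) t' x'
              - 2 * px u t' x' * pt u t' x'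
              + α * ((mf u t' x')^2 + 2 * (μ - 2) * (u t' x' + β) * mf u t' x'
                  - (μ - 2) * (u t' x' + β)^2) / (u t' x' + β)^2) t x = 0 := by
  intro t x
  have hp := aux_px_smooth hu
  have hq := aux_px_smooth hp
  have ha := aux_pt_smooth hu
  have hb := aux_pt_smooth hp
  have c1 : px (pt u) t x = pt (px u) t x := by rw [aux_comm hu]
  have c2 : px (pt (px u)) t x = pt (px (px u)) t x := by rw [aux_comm hp]
  have hw := hne t x
  have dU := aux_dX hu t x
  have dP := aux_dX hp t x
  have dQ := aux_dX hq t x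
  have dA := aux_dX ha t x
  have dB := aux_dX hb t x
  have tU := aux_dT hu t x
  have tP := aux_dT hp t x
  have tQ := aux_dT hq t x
  rw [c1] at dA
  rw [c2] at dB
  have dM : HasDerivAt (fun y => mf u t y) _ x := dU.sub dQ
  have E1 : pt (mf u) t x = _ := (tU.sub tQ).deriv
  have dW := dU.add_const β
  have dW2 := dW.pow 2
  have hw2 : (u t x + β) ^ 2 ≠ 0 := pow_ne_zero 2 hw
  have E2 : px (fun t' x' => (α / (u t' x' + β)^2) * mf u t' x') t x = _ :=
    (((hasDerivAt_const x α).div dW2 hw2).mul dM).deriv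
  have E3 : pt (fun t' x' =>
          (px (px u) t' x')^2 + μ * (px u t' x')^2 + (μ - 1) * (u t' x')^2
            + 2 * (μ - 2) * β * u t' x') t x = _ :=
    ((((tQ.pow 2).add ((tP.pow 2).const_mul μ)).add ((tU.pow 2).const_mul (μ - 1))).add
      (tU.const_mul (2 * (μ - 2) * β))).deriv
  have E4 : px (fun t' x' =>
            2 * ((1 - μ) * u t' x' - (μ - 2) * β) * pt (px u) t' x'
              - 2 * px u t' x' * pt u t' x'
              + α * ((mf u t' x')^2 + 2 * (μ - 2) * (u t' x' + β) * mf u t' x'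
                  - (μ - 2) * (u t' x' + β)^2) / (u t' x' + β)^2) t x = _ :=
    (((((((dU.const_mul (1 - μ)).sub_const ((μ - 2) * β)).const_mul 2).mul dB).sub
      ((dP.const_mul 2).mul dA)).add
      ((((((dM.pow 2).add ((dW.const_mul (2 * (μ - 2))).mul dM)).sub
        (dW2.const_mul (μ - 2))).const_mul α).div dW2 hw2)))).deriv
  have h := heq t x
  rw [E1, E2] at h
  rw [E3, E4]
  have hm : px (px u) t x = u t x - mf u t x := by simp [mf]
  simp only [Pi.pow_apply, Pi.div_apply, Pi.mul_apply, Pi.add_apply, Pi.sub_apply] at h ⊢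
  rw [hm]
  generalize mf u t x = m at *
  generalize px (px (px u)) t x = r at *
  generalize pt (px (px u)) t x = c at *
  generalize pt (px u) t x = b at *
  generalize pt u t x = a at *
  generalize px u t x = p at *
  have hu' : u t x = (u t x + β) - β := by ring
  generalize u t x + β = w at *
  rw [hu']
  have h' : c = a + α * p * m / w ^ 3 + α * (p - r) / w ^ 2 - 2 * α * p * m / w ^ 3 := by
    rw [← sub_eq_zero, ← neg_eq_zero, ← h]
    field_simp
    push_cast
    ring
  rw [h']
  field_simp
  push_cast
  ring

end
end

section
/- Let D = { (a,b) ∈ ℝ² : a > |b| } and let h1, h2, h3 : D → ℝ be smooth. For (a,b,c) ∈ D × ℝ define k(a,b,c) = h1(a,b)(a−c) + h2(a,b)(a−c)² + h3(a,b)(a−c)³, and for each smooth u : ℝ → ℝ with (u(x), u'(x)) ∈ D for all x, define the Euler expression E_u[k](x) = (∂k/∂a)(u,u',u'') − d/dx[ (∂k/∂b)(u,u',u'') ] + d²/dx²[ (∂k/∂c)(u,u',u'') ], where u, u', u'' are evaluated at x. Then E_u[k] vanishes identically for every such smooth u if and only if h2 ≡ 0, h3 ≡ 0, and there exist a smooth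 function k1 : (0,∞) → ℝ and a constant k0 ∈ ℝ such that h1(a,b) = b · k1(a² − b²) + k0 · a/(a² − b²) for all (a,b) ∈ D. -/
open Real

noncomputable section

/-- The Euler expression `E_u[k] = ∂_a k − d/dx(∂_b k) + d²/dx²(∂_c k)`, evaluated
along the curve `x ↦ (u x, u' x, u'' x)`; the variables `a, b, c` play the roles of
`u, u_x, u_xx`. -/
def eulerExpr (k : ℝ → ℝ → ℝ → ℝ) (u : ℝ → ℝ) (x : ℝ) : ℝ :=
  deriv (fun s => k s (deriv u x) (deriv (deriv u) x)) (u x)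
    - deriv (fun y => deriv (fun s => k (u y) s (deriv (deriv u) y)) (deriv u y)) x
    + deriv (deriv (fun y => deriv (fun s => k (u y) (deriv u y) s)
        (deriv (deriv u) y))) x


def eD : Set (ℝ × ℝ) := {p : ℝ × ℝ | p.1 > |p.2|}

lemma eD_open : IsOpen eD := isOpen_lt (by fun_prop) (by fun_prop)

def pa (h : ℝ → ℝ → ℝ) (a b : ℝ) : ℝ := deriv (fun s => h s b) a
def pb (h : ℝ → ℝ → ℝ) (a b : ℝ) : ℝ := deriv (fun s => h a s) b

def Sm (h : ℝ → ℝ → ℝ) : Prop := ContDiffOn ℝ (⊤ : ℕ∞) (Function.uncurry h) eD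

lemma Sm.hasF {h : ℝ → ℝ → ℝ} (hh : Sm h) {a b : ℝ} (hab : a > |b|) :
    HasFDerivAt (Function.uncurry h) (fderiv ℝ (Function.uncurry h) (a, b)) (a, b) := by
  have : ContDiffAt ℝ (⊤ : ℕ∞) (Function.uncurry h) (a, b) :=
    ContDiffOn.contDiffAt hh (eD_open.mem_nhds hab)
  exact (this.differentiableAt (by simp)).hasFDerivAt

lemma chain0 {h : ℝ → ℝ → ℝ} (hh : Sm h) {p q : ℝ → ℝ} {p' q' y : ℝ}
    (hp : HasDerivAt p p' y) (hq : HasDerivAt q q' y) (hab : p y > |q y|) :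
    HasDerivAt (fun y => h (p y) (q y))
      (fderiv ℝ (Function.uncurry h) (p y, q y) (p', q')) y :=
  HasFDerivAt.comp_hasDerivAt (l := Function.uncurry h) (f := fun y => (p y, q y)) y
    (hh.hasF hab) (hp.prodMk hq)

lemma pa_eq {h : ℝ → ℝ → ℝ} (hh : Sm h) {a b : ℝ} (hab : a > |b|) :
    pa h a b = fderiv ℝ (Function.uncurry h) (a, b) (1, 0) :=
  (chain0 hh (hasDerivAt_id a) (hasDerivAt_const a b) hab).deriv

lemma pb_eq {h : ℝ → ℝ → ℝ} (hh : Sm h) {a b : ℝ} (hab : a > |b|) :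
    pb h a b = fderiv ℝ (Function.uncurry h) (a, b) (0, 1) :=
  (chain0 hh (hasDerivAt_const b a) (hasDerivAt_id b) hab).deriv

lemma chain {h : ℝ → ℝ → ℝ} (hh : Sm h) {p q : ℝ → ℝ} {p' q' y : ℝ}
    (hp : HasDerivAt p p' y) (hq : HasDerivAt q q' y) (hab : p y > |q y|) :
    HasDerivAt (fun y => h (p y) (q y)) (pa h (p y) (q y) * p' + pb h (p y) (q y) * q') y := by
  convert chain0 hh hp hq hab using 1
  rw [pa_eq hh hab, pb_eq hh hab]
  have : ((p', q') : ℝ × ℝ) = p' • (1, 0) + q' • (0, 1) := by simp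
  rw [this, map_add, map_smul, map_smul]
  simp only [smul_eq_mul]; ring

lemma has_a {h : ℝ → ℝ → ℝ} (hh : Sm h) {a b : ℝ} (hab : a > |b|) :
    HasDerivAt (fun s => h s b) (pa h a b) a := by
  simpa using chain hh (hasDerivAt_id a) (hasDerivAt_const a b) hab

lemma has_b {h : ℝ → ℝ → ℝ} (hh : Sm h) {a b : ℝ} (hab : a > |b|) :
    HasDerivAt (fun s => h a s) (pb h a b) b := by
  simpa using chain hh (hasDerivAt_const b a) (hasDerivAt_id b) hab

lemma Sm.fd {h : ℝ → ℝ → ℝ} (hh : Sm h) :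
    ContDiffOn ℝ (⊤ : ℕ∞) (fderiv ℝ (Function.uncurry h)) eD :=
  ContDiffOn.fderiv_of_isOpen hh eD_open (by norm_cast)

lemma Sm.pa {h : ℝ → ℝ → ℝ} (hh : Sm h) : Sm (pa h) := by
  refine (hh.fd.clm_apply (contDiffOn_const (c := ((1, 0) : ℝ × ℝ)))).congr ?_
  rintro ⟨a, b⟩ hab
  exact pa_eq hh hab

lemma Sm.pb {h : ℝ → ℝ → ℝ} (hh : Sm h) : Sm (pb h) := by
  refine (hh.fd.clm_apply (contDiffOn_const (c := ((0, 1) : ℝ × ℝ)))).congr ?_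
  rintro ⟨a, b⟩ hab
  exact pb_eq hh hab

/-- `w = b h_a + a h_b`. -/
def wf (h : ℝ → ℝ → ℝ) (a b : ℝ) : ℝ := b * pa h a b + a * pb h a b

lemma Sm.wf {h : ℝ → ℝ → ℝ} (hh : Sm h) : Sm (wf h) := by
  have h1 : ContDiffOn ℝ (⊤ : ℕ∞) (Function.uncurry (_root_.pa h)) eD := hh.pa
  have h2 : ContDiffOn ℝ (⊤ : ℕ∞) (Function.uncurry (_root_.pb h)) eD := hh.pb
  exact (contDiffOn_snd.mul h1).add (contDiffOn_fst.mul h2)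

def Adm (u : ℝ → ℝ) : Prop := ContDiff ℝ (⊤ : ℕ∞) u ∧ ∀ x : ℝ, u x > |deriv u x|

lemma cd_deriv {u : ℝ → ℝ} (hu : ContDiff ℝ (⊤ : ℕ∞) u) :
    ContDiff ℝ (⊤ : ℕ∞) (deriv u) := by
  have := (contDiff_infty_iff_deriv (𝕜 := ℝ) (f := u)).1 hu
  exact this.2

lemma cd_has {u : ℝ → ℝ} (hu : ContDiff ℝ (⊤ : ℕ∞) u) (x : ℝ) :
    HasDerivAt u (deriv u x) x :=
  (hu.differentiable (by simp) x).hasDerivAt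

lemma euler_expand {h1 h2 h3 : ℝ → ℝ → ℝ} (hh1 : Sm h1) (hh2 : Sm h2) (hh3 : Sm h3)
    {k : ℝ → ℝ → ℝ → ℝ}
    (hk : ∀ a b c : ℝ,
      k a b c = h1 a b * (a - c) + h2 a b * (a - c)^2 + h3 a b * (a - c)^3)
    {u : ℝ → ℝ} (hu : Adm u) (x : ℝ) :
    eulerExpr k u x =
      (pa h1 (u x) (deriv u x) * (u x - deriv (deriv u) x) + h1 (u x) (deriv u x)
      + (pa h2 (u x) (deriv u x) * (u x - deriv (deriv u) x)^2
        + h2 (u x) (deriv u x) * (2 * (u x - deriv (deriv u) x)))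
      + (pa h3 (u x) (deriv u x) * (u x - deriv (deriv u) x)^3
        + h3 (u x) (deriv u x) * (3 * (u x - deriv (deriv u) x)^2)))
      - deriv (fun y => pb h1 (u y) (deriv u y) * (u y - deriv (deriv u) y)
          + pb h2 (u y) (deriv u y) * (u y - deriv (deriv u) y)^2
          + pb h3 (u y) (deriv u y) * (u y - deriv (deriv u) y)^3) x
      + deriv (deriv (fun y => - h1 (u y) (deriv u y)
          - h2 (u y) (deriv u y) * (2 * (u y - deriv (deriv u) y))
          - h3 (u y) (deriv u y) * (3 * (u y - deriv (deriv u) y)^2))) x := by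
  unfold eulerExpr
  simp only [hk]
  congr 1
  · congr 1
    · have hm := (hasDerivAt_id (u x)).sub_const (deriv (deriv u) x)
      have := (((has_a hh1 (hu.2 x)).mul hm).add ((has_a hh2 (hu.2 x)).mul (hm.pow 2))).add
        ((has_a hh3 (hu.2 x)).mul (hm.pow 3))
      refine (HasDerivAt.deriv this).trans ?_
      simp
    · congr 1
      funext y
      have := (((has_b hh1 (hu.2 y)).mul_const (u y - deriv (deriv u) y)).add
        ((has_b hh2 (hu.2 y)).mul_const ((u y - deriv (deriv u) y)^2))).add
        ((has_b hh3 (hu.2 y)).mul_const ((u y - deriv (deriv u) y)^3))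
      exact (HasDerivAt.deriv this)
  · congr 2
    funext y
    have hm := (hasDerivAt_id (deriv (deriv u) y)).const_sub (u y)
    have := ((hm.const_mul (h1 (u y) (deriv u y))).add
      ((hm.pow 2).const_mul (h2 (u y) (deriv u y)))).add
      ((hm.pow 3).const_mul (h3 (u y) (deriv u y)))
    refine (HasDerivAt.deriv this).trans ?_
    simp; ring

lemma euler_top {h1 h2 h3 : ℝ → ℝ → ℝ} (hh1 : Sm h1) (hh2 : Sm h2) (hh3 : Sm h3)
    {k : ℝ → ℝ → ℝ → ℝ}
    (hk : ∀ a b c : ℝ,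
      k a b c = h1 a b * (a - c) + h2 a b * (a - c)^2 + h3 a b * (a - c)^3) :
    ∃ Φ : ℝ → ℝ → ℝ → ℝ → ℝ, ∀ u, Adm u → ∀ x, eulerExpr k u x =
      Φ (u x) (deriv u x) (deriv (deriv u) x) (deriv (deriv (deriv u)) x)
      + (2 * h2 (u x) (deriv u x) + 6 * h3 (u x) (deriv u x) * (u x - deriv (deriv u) x))
        * deriv (deriv (deriv (deriv u))) x := by
  let d1 : (ℝ → ℝ → ℝ) → ℝ → ℝ → ℝ → ℝ := fun h a b c => pa h a b * b + pb h a b * c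
  let d2 : (ℝ → ℝ → ℝ) → ℝ → ℝ → ℝ → ℝ → ℝ := fun h a b c d =>
    d1 (pa h) a b c * b + pa h a b * c + (d1 (pb h) a b c * c + pb h a b * d)
  refine ⟨fun a b c d =>
    (pa h1 a b * (a - c) + h1 a b + (pa h2 a b * (a - c)^2 + h2 a b * (2 * (a - c)))
      + (pa h3 a b * (a - c)^3 + h3 a b * (3 * (a - c)^2)))
    - ((d1 (pb h1) a b c * (a - c) + pb h1 a b * (b - d))
      + (d1 (pb h2) a b c * (a - c)^2 + pb h2 a b * (2 * (a - c) * (b - d)))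
      + (d1 (pb h3) a b c * (a - c)^3 + pb h3 a b * (3 * (a - c)^2 * (b - d))))
    + (- d2 h1 a b c d
      - (d2 h2 a b c d * (2 * (a - c)) + 2 * (d1 h2 a b c * (2 * (b - d)))
        + h2 a b * (2 * c))
      - (d2 h3 a b c d * (3 * (a - c)^2) + 2 * (d1 h3 a b c * (6 * (a - c) * (b - d)))
        + h3 a b * (6 * (b - d)^2 + 6 * (a - c) * c))), ?_⟩
  intro u hu x
  rw [euler_expand hh1 hh2 hh3 hk hu x]
  have c1 := cd_deriv hu.1
  have c2 := cd_deriv c1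
  have c3 := cd_deriv c2
  have u0 := cd_has hu.1
  have u1 := cd_has c1
  have u2 := cd_has c2
  have u3 := cd_has c3
  have hm : ∀ y, HasDerivAt (fun y => u y - deriv (deriv u) y)
    (deriv u y - deriv (deriv (deriv u)) y) y := fun y => (u0 y).sub (u2 y)
  have hm1 : ∀ y, HasDerivAt (fun y => deriv u y - deriv (deriv (deriv u)) y)
    (deriv (deriv u) y - deriv (deriv (deriv (deriv u))) y) y := fun y => (u1 y).sub (u3 y)
  have D1 : ∀ {h : ℝ → ℝ → ℝ}, Sm h → ∀ y, HasDerivAt (fun y => h (u y) (deriv u y))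
      (d1 h (u y) (deriv u y) (deriv (deriv u) y)) y :=
    fun hh y => chain hh (u0 y) (u1 y) (hu.2 y)
  have D2 : ∀ {h : ℝ → ℝ → ℝ}, Sm h → ∀ y,
      HasDerivAt (fun y => d1 h (u y) (deriv u y) (deriv (deriv u) y))
      (d2 h (u y) (deriv u y) (deriv (deriv u) y) (deriv (deriv (deriv u)) y)) y :=
    fun hh y => ((D1 hh.pa y).mul (u1 y)).add ((D1 hh.pb y).mul (u2 y))
  have e1 := ((((D1 hh1.pb x).mul (hm x)).add ((D1 hh2.pb x).mul ((hm x).pow 2))).add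
    ((D1 hh3.pb x).mul ((hm x).pow 3))).deriv
  have e2 : deriv (fun y => - h1 (u y) (deriv u y)
          - h2 (u y) (deriv u y) * (2 * (u y - deriv (deriv u) y))
          - h3 (u y) (deriv u y) * (3 * (u y - deriv (deriv u) y)^2)) = fun y =>
      - d1 h1 (u y) (deriv u y) (deriv (deriv u) y)
      - (d1 h2 (u y) (deriv u y) (deriv (deriv u) y) * (2 * (u y - deriv (deriv u) y))
        + h2 (u y) (deriv u y) * (2 * (deriv u y - deriv (deriv (deriv u)) y)))
      - (d1 h3 (u y) (deriv u y) (deriv (deriv u) y) * (3 * (u y - deriv (deriv u) y)^2)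
        + h3 (u y) (deriv u y) * (3 * (2 * (u y - deriv (deriv u) y)
          * (deriv u y - deriv (deriv (deriv u)) y)))) := by
    funext y
    have := (((D1 hh1 y).neg.sub ((D1 hh2 y).mul ((hm y).const_mul 2))).sub
      ((D1 hh3 y).mul (((hm y).pow 2).const_mul 3))).deriv
    refine this.trans ?_
    simp
  have e3 := ((((D2 hh1 x).neg.sub (((D2 hh2 x).mul ((hm x).const_mul 2)).add
    ((D1 hh2 x).mul ((hm1 x).const_mul 2)))).sub
    (((D2 hh3 x).mul (((hm x).pow 2).const_mul 3)).add
    ((D1 hh3 x).mul ((((hm x).const_mul 2).mul (hm1 x)).const_mul 3))))).deriv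
  rw [e2]
  refine (congrArg₂ (· + ·) (congrArg₂ (· - ·) rfl e1) e3).trans ?_
  simp
  ring

lemma euler_low {h1 h2 h3 : ℝ → ℝ → ℝ} (hh1 : Sm h1) (hh2 : Sm h2) (hh3 : Sm h3)
    {k : ℝ → ℝ → ℝ → ℝ}
    (hk : ∀ a b c : ℝ,
      k a b c = h1 a b * (a - c) + h2 a b * (a - c)^2 + h3 a b * (a - c)^3)
    (z2 : ∀ a b : ℝ, a > |b| → h2 a b = 0) (z3 : ∀ a b : ℝ, a > |b| → h3 a b = 0)
    {u : ℝ → ℝ} (hu : Adm u) (x : ℝ) :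
    eulerExpr k u x = pa h1 (u x) (deriv u x) * (u x - deriv (deriv u) x)
      + h1 (u x) (deriv u x)
      - (pa (wf h1) (u x) (deriv u x) * deriv u x
        + pb (wf h1) (u x) (deriv u x) * deriv (deriv u) x) := by
  have za : ∀ {h : ℝ → ℝ → ℝ}, (∀ a b : ℝ, a > |b| → h a b = 0) →
      ∀ a b : ℝ, a > |b| → pa h a b = 0 := by
    intro h z a b hab
    have : (fun s => h s b) =ᶠ[nhds a] fun _ => 0 := by
      filter_upwards [lt_mem_nhds hab] with s hs using z s b hs
    simp [pa, this.deriv_eq]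
  have zb : ∀ {h : ℝ → ℝ → ℝ}, (∀ a b : ℝ, a > |b| → h a b = 0) →
      ∀ a b : ℝ, a > |b| → pb h a b = 0 := by
    intro h z a b hab
    have : (fun s => h a s) =ᶠ[nhds b] fun _ => 0 := by
      have : ∀ᶠ s in nhds b, |s| < a := (continuous_abs.tendsto b).eventually (gt_mem_nhds hab)
      filter_upwards [this] with s hs using z a s hs
    simp [pb, this.deriv_eq]
  rw [euler_expand hh1 hh2 hh3 hk hu x]
  simp only [z2 _ _ (hu.2 _), z3 _ _ (hu.2 _), za z2 _ _ (hu.2 _), za z3 _ _ (hu.2 _),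
    zb z2 _ _ (hu.2 _), zb z3 _ _ (hu.2 _), zero_mul, add_zero, sub_zero]
  have c1 := cd_deriv hu.1
  have c2 := cd_deriv c1
  have u0 := cd_has hu.1
  have u1 := cd_has c1
  have u2 := cd_has c2
  have e2 : deriv (fun y => - h1 (u y) (deriv u y)) = fun y =>
      - (pa h1 (u y) (deriv u y) * deriv u y + pb h1 (u y) (deriv u y) * deriv (deriv u) y) := by
    funext y
    exact (chain hh1 (u0 y) (u1 y) (hu.2 y)).neg.deriv
  rw [e2]
  have A := chain hh1.pa (u0 x) (u1 x) (hu.2 x)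
  have B := chain hh1.pb (u0 x) (u1 x) (hu.2 x)
  have W := chain hh1.wf (u0 x) (u1 x) (hu.2 x)
  have F := B.mul ((u0 x).sub (u2 x))
  have G := ((A.mul (u1 x)).add (B.mul (u2 x))).neg
  have W2 := ((u1 x).mul A).add ((u0 x).mul B)
  have W3 := HasDerivAt.unique W W2
  rw [W3]
  refine (congrArg₂ (· + ·) (congrArg₂ (· - ·) rfl F.deriv) G.deriv).trans ?_
  simp only [Pi.sub_apply]
  ring

lemma jet_gen (v v1 v2 v3 v4 : ℝ → ℝ) (a0 : ∀ x, HasDerivAt v (v1 x) x)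
    (a1 : ∀ x, HasDerivAt v1 (v2 x) x) (a2 : ∀ x, HasDerivAt v2 (v3 x) x)
    (a3 : ∀ x, HasDerivAt v3 (v4 x) x) :
    deriv (fun x => exp (v x)) = (fun x => exp (v x) * v1 x) ∧
    deriv (deriv (fun x => exp (v x))) = (fun x => exp (v x) * (v1 x ^ 2 + v2 x)) ∧
    deriv (deriv (deriv (fun x => exp (v x)))) =
      (fun x => exp (v x) * (v1 x ^ 3 + 3 * (v1 x * v2 x) + v3 x)) ∧
    deriv (deriv (deriv (deriv (fun x => exp (v x))))) =
      (fun x => exp (v x) * (v1 x ^ 4 + 6 * (v1 x ^ 2 * v2 x) + 3 * v2 x ^ 2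
        + 4 * (v1 x * v3 x) + v4 x)) := by
  have e1 : deriv (fun x => exp (v x)) = (fun x => exp (v x) * v1 x) := by
    funext x; exact (a0 x).exp.deriv
  have e2 : deriv (deriv (fun x => exp (v x))) = (fun x => exp (v x) * (v1 x ^ 2 + v2 x)) := by
    rw [e1]; funext x; refine ((a0 x).exp.mul (a1 x)).deriv.trans ?_; ring
  have e3 : deriv (deriv (deriv (fun x => exp (v x)))) =
      (fun x => exp (v x) * (v1 x ^ 3 + 3 * (v1 x * v2 x) + v3 x)) := by
    rw [e2]; funext x; refine ((a0 x).exp.mul (((a1 x).pow 2).add (a2 x))).deriv.trans ?_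
    simp only [Pi.add_apply, Pi.pow_apply]; push_cast; ring
  refine ⟨e1, e2, e3, ?_⟩
  rw [e3]; funext x
  refine ((a0 x).exp.mul ((((a1 x).pow 3).add (((a1 x).mul (a2 x)).const_mul 3)).add
    (a3 x))).deriv.trans ?_
  simp; ring

lemma jets {a b : ℝ} (hab : a > |b|) (c : ℝ) : ∃ d e, ∃ δ : ℝ, δ ≠ 0 ∧
    ∀ t : ℝ, t = 0 ∨ t = 1 → ∃ u, Adm u ∧ u 0 = a ∧ deriv u 0 = b ∧ deriv (deriv u) 0 = c ∧
      deriv (deriv (deriv u)) 0 = d ∧ deriv (deriv (deriv (deriv u))) 0 = e + t * δ := by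
  have ha : 0 < a := lt_of_le_of_lt (abs_nonneg b) hab
  set β := b / a with hβ
  have hβ1 : |β| < 1 := by
    rw [hβ, abs_div, abs_of_pos ha]; exact (div_lt_one ha).2 hab
  set p := c / a - β ^ 2 with hp
  obtain ⟨N, hN⟩ : ∃ N : ℝ, 0 < N ∧ (|p| + 4) / N < 1 - |β| := by
    refine ⟨(|p| + 4) / (1 - |β|) + 1, ?_, ?_⟩
    · have : 0 < 1 - |β| := by linarith
      positivity
    · have h0 : 0 < 1 - |β| := by linarith
      rw [div_lt_iff₀ (by positivity)]
      have : (1 - |β|) * ((|p| + 4) / (1 - |β|) + 1) = |p| + 4 + (1 - |β|) := by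
        field_simp
      linarith
  obtain ⟨hN0, hN⟩ := hN
  refine ⟨a * (β ^ 3 + 3 * (β * p)),
    a * (β ^ 4 + 6 * (β ^ 2 * p) + 3 * p ^ 2 - p * N ^ 2), a * (6 * N ^ 2),
    by positivity, ?_⟩
  intro t ht
  let v : ℝ → ℝ := fun x => Real.log a + β * x
    + p / N ^ 2 * (1 - cos (N * x)) + t / N ^ 2 * (1 - cos (N * x)) ^ 2
  let v1 : ℝ → ℝ := fun x => β + p / N * sin (N * x)
    + t / N * (2 * (1 - cos (N * x)) * sin (N * x))
  let v2 : ℝ → ℝ := fun x => p * cos (N * x)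
    + t * (2 * (sin (N * x) ^ 2 + (1 - cos (N * x)) * cos (N * x)))
  let v3 : ℝ → ℝ := fun x => - p * N * sin (N * x)
    + t * N * (2 * (4 * (sin (N * x) * cos (N * x)) - sin (N * x)))
  let v4 : ℝ → ℝ := fun x => - p * N ^ 2 * cos (N * x)
    + t * N ^ 2 * (2 * (4 * (cos (N * x) ^ 2 - sin (N * x) ^ 2) - cos (N * x)))
  have hlin : ∀ x, HasDerivAt (fun x : ℝ => N * x) N x := fun x => by
    simpa using (hasDerivAt_id x).const_mul N
  have hs : ∀ x, HasDerivAt (fun x : ℝ => sin (N * x)) (cos (N * x) * N) x :=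
    fun x => (hlin x).sin
  have hc : ∀ x, HasDerivAt (fun x : ℝ => cos (N * x)) (- sin (N * x) * N) x :=
    fun x => (hlin x).cos
  have hc1 : ∀ x, HasDerivAt (fun x : ℝ => 1 - cos (N * x)) (-(- sin (N * x) * N)) x :=
    fun x => (hc x).const_sub 1
  have a0 : ∀ x, HasDerivAt v (v1 x) x := by
    intro x
    have hb : HasDerivAt (fun x : ℝ => Real.log a + β * x) β x := by
      simpa using ((hasDerivAt_id x).const_mul β).const_add (Real.log a)
    have := (hb.add ((hc1 x).const_mul (p / N ^ 2))).add (((hc1 x).pow 2).const_mul (t / N ^ 2))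
    refine this.congr_deriv ?_
    simp only [v1]; field_simp; push_cast; ring
  have a1 : ∀ x, HasDerivAt v1 (v2 x) x := by
    intro x
    have := (((hs x).const_mul (p / N)).const_add β).add
      ((((hc1 x).const_mul 2).mul (hs x)).const_mul (t / N))
    refine this.congr_deriv ?_
    simp only [v2]; field_simp
  have a2 : ∀ x, HasDerivAt v2 (v3 x) x := by
    intro x
    have := ((hc x).const_mul p).add
      (((((hs x).pow 2).add ((hc1 x).mul (hc x))).const_mul 2).const_mul t)
    refine this.congr_deriv ?_
    simp only [v3]; push_cast; ring
  have a3 : ∀ x, HasDerivAt v3 (v4 x) x := by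
    intro x
    have := ((hs x).const_mul (- p * N)).add
      ((((((hs x).mul (hc x)).const_mul 4).sub (hs x)).const_mul 2).const_mul (t * N))
    refine this.congr_deriv ?_
    simp only [v4]; ring
  obtain ⟨e1, e2, e3, e4⟩ := jet_gen v v1 v2 v3 v4 a0 a1 a2 a3
  have hv0 : exp (v 0) = a := by simp [v, Real.exp_log ha]
  refine ⟨fun x => exp (v x), ⟨?_, ?_⟩, hv0, ?_, ?_, ?_, ?_⟩
  · simp only [v]; fun_prop
  · intro x
    rw [e1]
    simp only [abs_mul, abs_of_pos (exp_pos _)]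
    have : |v1 x| < 1 := by
      have s1 : |sin (N * x)| ≤ 1 := abs_sin_le_one _
      have s2 : |1 - cos (N * x)| ≤ 2 := by
        rw [abs_le]; constructor <;> linarith [cos_le_one (N * x), neg_one_le_cos (N * x)]
      have t1 : |t| ≤ 1 := by rcases ht with h | h <;> simp [h]
      have b1 : |p / N * sin (N * x)| ≤ |p| / N := by
        rw [abs_mul, abs_div, abs_of_pos hN0]
        exact mul_le_of_le_one_right (by positivity) s1
      have b2 : |t / N * (2 * (1 - cos (N * x)) * sin (N * x))| ≤ 4 / N := by
        rw [abs_mul, abs_div, abs_of_pos hN0, abs_mul, abs_mul, abs_two]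
        calc |t| / N * (2 * |1 - cos (N * x)| * |sin (N * x)|)
            ≤ 1 / N * (2 * 2 * 1) := by gcongr
          _ = 4 / N := by ring
      calc |v1 x| ≤ |β| + |p / N * sin (N * x)|
            + |t / N * (2 * (1 - cos (N * x)) * sin (N * x))| := abs_add_three _ _ _
        _ ≤ |β| + |p| / N + 4 / N := by gcongr
        _ = |β| + (|p| + 4) / N := by ring
        _ < 1 := by linarith
    exact mul_lt_of_lt_one_right (exp_pos _) this
  · rw [e1]; simp only [hv0]; simp [v1, hβ]; try field_simp
  · rw [e2]; simp only [hv0]; simp [v1, v2, hp]; field_simp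
  · rw [e3]; simp only [hv0]; simp [v1, v2, v3]
  · rw [e4]; simp only [hv0]; simp [v1, v2, v3, v4]; ring

lemma hyp_param {a b : ℝ} (hab : a > |b|) :
    ∃ t, a = √(a ^ 2 - b ^ 2) * cosh t ∧ b = √(a ^ 2 - b ^ 2) * sinh t := by
  have ha : 0 < a := lt_of_le_of_lt (abs_nonneg b) hab
  have hs : 0 < a ^ 2 - b ^ 2 := by
    have := sq_lt_sq' (by linarith [neg_abs_le b, le_abs_self b, abs_nonneg b]) hab
    rw [sq_abs] at this; linarith
  set r := √(a ^ 2 - b ^ 2) with hr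
  have hr0 : 0 < r := Real.sqrt_pos.2 hs
  have hr2 : r ^ 2 = a ^ 2 - b ^ 2 := Real.sq_sqrt hs.le
  have hb : b = r * sinh (arsinh (b / r)) := by rw [Real.sinh_arsinh]; field_simp
  refine ⟨arsinh (b / r), ?_, hb⟩
  have h2 := Real.cosh_sq (arsinh (b / r))
  have : a ^ 2 = (r * cosh (arsinh (b / r))) ^ 2 := by
    rw [mul_pow, h2]
    have : b ^ 2 = (r * sinh (arsinh (b / r))) ^ 2 := by rw [← hb]
    linarith
  exact (pow_left_inj₀ ha.le (by positivity) two_ne_zero).1 this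

lemma hyp_mem {r : ℝ} (hr : 0 < r) (t : ℝ) : r * cosh t > |r * sinh t| := by
  rw [abs_mul, abs_of_pos hr]
  have : |sinh t| < cosh t := by
    rw [abs_lt]; constructor
    · have := Real.cosh_add_sinh t; linarith [exp_pos t]
    · exact Real.sinh_lt_cosh t
  gcongr

lemma solve {h : ℝ → ℝ → ℝ} (hh : Sm h)
    (c1 : ∀ a b : ℝ, a > |b| → pb (wf h) a b = - pa h a b)
    (c2 : ∀ a b : ℝ, a > |b| → b * pa (wf h) a b = h a b + a * pa h a b) :
    ∃ k1 : ℝ → ℝ, ContDiffOn ℝ (⊤ : ℕ∞) k1 (Set.Ioi 0) ∧ ∃ k0 : ℝ,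
          ∀ a b : ℝ, a > |b| →
            h a b = b * k1 (a^2 - b^2) + k0 * a / (a^2 - b^2) := by
  have hw := hh.wf
  have curve : ∀ r t : ℝ, HasDerivAt (fun t => r * cosh t) (r * sinh t) t ∧
      HasDerivAt (fun t => r * sinh t) (r * cosh t) t := fun r t =>
    ⟨(Real.hasDerivAt_cosh t).const_mul r, (Real.hasDerivAt_sinh t).const_mul r⟩
  -- both invariants along hyperbolas
  have I1 : ∀ r > 0, ∀ t, r * cosh t * h (r * cosh t) (r * sinh t)
      - r * sinh t * wf h (r * cosh t) (r * sinh t) = r * h r 0 := by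
    intro r hr t
    have D : ∀ t, HasDerivAt (fun t => r * cosh t * h (r * cosh t) (r * sinh t)
      - r * sinh t * wf h (r * cosh t) (r * sinh t)) 0 t := by
      intro t
      obtain ⟨p, q⟩ := curve r t
      have m := hyp_mem hr t
      refine ((p.mul (chain hh p q m)).sub (q.mul (chain hw p q m))).congr_deriv ?_
      have e1 := c1 _ _ m
      have e2 := c2 _ _ m
      rw [e1]
      have e3 : wf h (r * cosh t) (r * sinh t) = r * sinh t * pa h (r * cosh t) (r * sinh t)
        + r * cosh t * pb h (r * cosh t) (r * sinh t) := rfl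
      linear_combination (-(r * sinh t)) * e2 + (- r * cosh t) * e3
    have := is_const_of_deriv_eq_zero (fun t => (D t).differentiableAt)
      (fun t => (D t).deriv) t 0
    simpa using this
  have I2 : ∀ r > 0, ∀ t, r * cosh t * wf h (r * cosh t) (r * sinh t)
      - r * sinh t * h (r * cosh t) (r * sinh t) = r * (r * pb h r 0) := by
    intro r hr t
    have D : ∀ t, HasDerivAt (fun t => r * cosh t * wf h (r * cosh t) (r * sinh t)
      - r * sinh t * h (r * cosh t) (r * sinh t)) 0 t := by
      intro t
      obtain ⟨p, q⟩ := curve r t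
      have m := hyp_mem hr t
      refine ((p.mul (chain hw p q m)).sub (q.mul (chain hh p q m))).congr_deriv ?_
      have e1 := c1 _ _ m
      have e2 := c2 _ _ m
      rw [e1]
      have e3 : wf h (r * cosh t) (r * sinh t) = r * sinh t * pa h (r * cosh t) (r * sinh t)
        + r * cosh t * pb h (r * cosh t) (r * sinh t) := rfl
      linear_combination (r * cosh t) * e2 + (r * sinh t) * e3
    have := is_const_of_deriv_eq_zero (fun t => (D t).differentiableAt)
      (fun t => (D t).deriv) t 0
    simpa [wf] using this
  have I3 : ∀ r > 0, r * h r 0 = h 1 0 := by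
    intro r hr
    have D : ∀ s, HasDerivAt (fun s => exp s * h (exp s) 0) 0 s := by
      intro s
      have m : exp s > |(0 : ℝ)| := by simpa using exp_pos s
      have p := Real.hasDerivAt_exp s
      refine (p.mul (chain hh p (hasDerivAt_const s (0 : ℝ)) m)).congr_deriv ?_
      have e2 := c2 _ _ m
      linear_combination (- exp s) * e2
    have := is_const_of_deriv_eq_zero (fun t => (D t).differentiableAt)
      (fun t => (D t).deriv) (Real.log r) 0
    simpa [Real.exp_log hr] using this
  refine ⟨fun s => pb h (√s) 0, ?_, h 1 0, ?_⟩
  · have hs : ContDiffOn ℝ (⊤ : ℕ∞) (fun s : ℝ => ((√s, 0) : ℝ × ℝ)) (Set.Ioi 0) := by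
      refine ContDiffOn.prodMk ?_ contDiffOn_const
      exact contDiffOn_id.sqrt (fun x hx => ne_of_gt hx)
    refine ContDiffOn.comp (g := Function.uncurry (pb h)) hh.pb hs ?_
    intro s hs
    have : 0 < √s := Real.sqrt_pos.2 hs
    simpa [eD] using hs
  · intro a b hab
    have ha : 0 < a := lt_of_le_of_lt (abs_nonneg b) hab
    have hs : 0 < a ^ 2 - b ^ 2 := by
      have := sq_lt_sq' (by linarith [neg_abs_le b, le_abs_self b, abs_nonneg b]) hab
      rw [sq_abs] at this; linarith
    obtain ⟨t, ea, eb⟩ := hyp_param hab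
    have hr0 : 0 < √(a ^ 2 - b ^ 2) := Real.sqrt_pos.2 hs
    have j1 := I1 _ hr0 t
    have j2 := I2 _ hr0 t
    have j3 := I3 _ hr0
    rw [← ea, ← eb] at j1 j2
    have hr2 : √(a ^ 2 - b ^ 2) ^ 2 = a ^ 2 - b ^ 2 := Real.sq_sqrt hs.le
    rw [j3] at j1
    have hne := hs.ne'
    simp only []
    generalize √(a ^ 2 - b ^ 2) = r at *
    field_simp
    linear_combination a * j1 + b * j2 + b * pb h r 0 * hr2

lemma verify {h : ℝ → ℝ → ℝ}
    {k1 : ℝ → ℝ} (hk1 : ContDiffOn ℝ (⊤ : ℕ∞) k1 (Set.Ioi 0)) {k0 : ℝ}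
    (hf : ∀ a b : ℝ, a > |b| → h a b = b * k1 (a^2 - b^2) + k0 * a / (a^2 - b^2)) :
    (∀ a b : ℝ, a > |b| → pb (wf h) a b = - pa h a b) ∧
    (∀ a b : ℝ, a > |b| → b * pa (wf h) a b = h a b + a * pa h a b) := by
  have pos : ∀ a b : ℝ, a > |b| → 0 < a ^ 2 - b ^ 2 := by
    intro a b hab
    have := sq_lt_sq' (by linarith [neg_abs_le b, le_abs_self b, abs_nonneg b]) hab
    rw [sq_abs] at this; linarith
  have dk : ∀ s > 0, HasDerivAt k1 (deriv k1 s) s := fun s hs =>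
    ((hk1.contDiffAt (Ioi_mem_nhds hs)).differentiableAt (by simp)).hasDerivAt
  have na : ∀ a b : ℝ, a > |b| → ∀ᶠ s in nhds a, s > |b| := fun a b hab => lt_mem_nhds hab
  have nb : ∀ a b : ℝ, a > |b| → ∀ᶠ s in nhds b, a > |s| := fun a b hab =>
    (continuous_abs.tendsto b).eventually (gt_mem_nhds hab)
  have sa : ∀ a b : ℝ, HasDerivAt (fun s : ℝ => s ^ 2 - b ^ 2) (2 * a) a := fun a b => by
    simpa using ((hasDerivAt_id a).pow 2).sub_const (b ^ 2)
  have sb : ∀ a b : ℝ, HasDerivAt (fun s : ℝ => a ^ 2 - s ^ 2) (- (2 * b)) b := fun a b => by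
    simpa using ((hasDerivAt_id b).pow 2).const_sub (a ^ 2)
  have ka : ∀ a b : ℝ, a > |b| → HasDerivAt (fun s : ℝ => k1 (s ^ 2 - b ^ 2))
      (deriv k1 (a ^ 2 - b ^ 2) * (2 * a)) a := fun a b hab =>
    (dk _ (pos a b hab)).comp a (sa a b)
  have kb : ∀ a b : ℝ, a > |b| → HasDerivAt (fun s : ℝ => k1 (a ^ 2 - s ^ 2))
      (deriv k1 (a ^ 2 - b ^ 2) * (- (2 * b))) b := fun a b hab =>
    (dk _ (pos a b hab)).comp b (sb a b)
  have A : ∀ a b : ℝ, a > |b| → pa h a b = b * (deriv k1 (a ^ 2 - b ^ 2) * (2 * a))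
      + (k0 * (a ^ 2 - b ^ 2) - k0 * a * (2 * a)) / (a ^ 2 - b ^ 2) ^ 2 := by
    intro a b hab
    have e : (fun s => h s b) =ᶠ[nhds a] fun s => b * k1 (s^2 - b^2) + k0 * s / (s^2 - b^2) := by
      filter_upwards [na a b hab] with s hs using hf s b hs
    rw [pa, e.deriv_eq]
    have := ((ka a b hab).const_mul b).add
      ((((hasDerivAt_id a).const_mul k0)).div (sa a b) (pos a b hab).ne')
    refine (HasDerivAt.deriv this).trans ?_
    simp
  have B : ∀ a b : ℝ, a > |b| → pb h a b = k1 (a ^ 2 - b ^ 2)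
      + b * (deriv k1 (a ^ 2 - b ^ 2) * (- (2 * b)))
      + (k0 * a * (2 * b)) / (a ^ 2 - b ^ 2) ^ 2 := by
    intro a b hab
    have e : (fun s => h a s) =ᶠ[nhds b] fun s => s * k1 (a^2 - s^2) + k0 * a / (a^2 - s^2) := by
      filter_upwards [nb a b hab] with s hs using hf a s hs
    rw [pb, e.deriv_eq]
    have := ((hasDerivAt_id b).mul (kb a b hab)).add
      ((hasDerivAt_const b (k0 * a)).div (sb a b) (pos a b hab).ne')
    refine (HasDerivAt.deriv this).trans ?_
    simp
  have W : ∀ a b : ℝ, a > |b| → wf h a b = a * k1 (a ^ 2 - b ^ 2) + k0 * b / (a ^ 2 - b ^ 2) := by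
    intro a b hab
    have := (pos a b hab).ne'
    rw [wf, A a b hab, B a b hab]
    field_simp
    ring
  constructor
  · intro a b hab
    have hne := (pos a b hab).ne'
    have e : (fun s => wf h a s) =ᶠ[nhds b]
        fun s => a * k1 (a^2 - s^2) + k0 * s / (a^2 - s^2) := by
      filter_upwards [nb a b hab] with s hs using W a s hs
    rw [A a b hab, pb, e.deriv_eq]
    have := ((kb a b hab).const_mul a).add
      ((((hasDerivAt_id b).const_mul k0)).div (sb a b) hne)
    refine (HasDerivAt.deriv this).trans ?_
    simp
    field_simp
    ring
  · intro a b hab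
    have hne := (pos a b hab).ne'
    have e : (fun s => wf h s b) =ᶠ[nhds a]
        fun s => s * k1 (s^2 - b^2) + k0 * b / (s^2 - b^2) := by
      filter_upwards [na a b hab] with s hs using W s b hs
    have := ((hasDerivAt_id a).mul (ka a b hab)).add
      ((hasDerivAt_const a (k0 * b)).div (sa a b) hne)
    have e2 : deriv (fun s => s * k1 (s^2 - b^2) + k0 * b / (s^2 - b^2)) a = _ :=
      HasDerivAt.deriv this
    rw [A a b hab, hf a b hab, pa, e.deriv_eq, e2]
    simp
    field_simp
    ring

/-- classification of the kernel of the spatial Euler operator on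
expressions `k = h1 m + h2 m² + h3 m³` with `m = a − c`, over the domain
`D = {(a,b) : a > |b|}`. -/
theorem euler_operator_kernel_classification
    (h1 h2 h3 : ℝ → ℝ → ℝ)
    (hh1 : ContDiffOn ℝ (⊤ : ℕ∞) (Function.uncurry h1) {p : ℝ × ℝ | p.1 > |p.2|})
    (hh2 : ContDiffOn ℝ (⊤ : ℕ∞) (Function.uncurry h2) {p : ℝ × ℝ | p.1 > |p.2|})
    (hh3 : ContDiffOn ℝ (⊤ : ℕ∞) (Function.uncurry h3) {p : ℝ × ℝ | p.1 > |p.2|})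
    (k : ℝ → ℝ → ℝ → ℝ)
    (hk : ∀ a b c : ℝ,
      k a b c = h1 a b * (a - c) + h2 a b * (a - c)^2 + h3 a b * (a - c)^3) :
    (∀ u : ℝ → ℝ, ContDiff ℝ (⊤ : ℕ∞) u → (∀ x : ℝ, u x > |deriv u x|) →
        ∀ x : ℝ, eulerExpr k u x = 0)
    ↔
    ((∀ a b : ℝ, a > |b| → h2 a b = 0)
      ∧ (∀ a b : ℝ, a > |b| → h3 a b = 0)
      ∧ ∃ k1 : ℝ → ℝ, ContDiffOn ℝ (⊤ : ℕ∞) k1 (Set.Ioi 0) ∧ ∃ k0 : ℝ,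
          ∀ a b : ℝ, a > |b| →
            h1 a b = b * k1 (a^2 - b^2) + k0 * a / (a^2 - b^2)) := by
  have H1 : Sm h1 := hh1
  have H2 : Sm h2 := hh2
  have H3 : Sm h3 := hh3
  constructor
  · intro hE
    obtain ⟨Φ, hΦ⟩ := euler_top H1 H2 H3 hk
    have key : ∀ a b : ℝ, a > |b| → ∀ c, 2 * h2 a b + 6 * h3 a b * (a - c) = 0 := by
      intro a b hab c
      obtain ⟨d, e, δ, hδ, hj⟩ := jets hab c
      obtain ⟨u, hu, p0, p1, p2, p3, p4⟩ := hj 0 (Or.inl rfl)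
      obtain ⟨w, hw, q0, q1, q2, q3, q4⟩ := hj 1 (Or.inr rfl)
      have r1 := hΦ u hu 0
      have r2 := hΦ w hw 0
      rw [hE u hu.1 hu.2 0, p0, p1, p2, p3, p4] at r1
      rw [hE w hw.1 hw.2 0, q0, q1, q2, q3, q4] at r2
      have : (2 * h2 a b + 6 * h3 a b * (a - c)) * δ = 0 := by linear_combination r1 - r2
      exact (mul_eq_zero.1 this).resolve_right hδ
    have z2 : ∀ a b : ℝ, a > |b| → h2 a b = 0 := fun a b hab => by
      have := key a b hab a
      simpa using this
    have z3 : ∀ a b : ℝ, a > |b| → h3 a b = 0 := fun a b hab => by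
      have := key a b hab (a - 1)
      rw [z2 a b hab] at this
      linarith
    refine ⟨z2, z3, ?_⟩
    have low : ∀ a b : ℝ, a > |b| → ∀ c, pa h1 a b * (a - c) + h1 a b
        - (pa (wf h1) a b * b + pb (wf h1) a b * c) = 0 := by
      intro a b hab c
      obtain ⟨d, e, δ, hδ, hj⟩ := jets hab c
      obtain ⟨u, hu, p0, p1, p2, p3, p4⟩ := hj 0 (Or.inl rfl)
      have r := euler_low H1 H2 H3 hk z2 z3 hu 0
      rw [hE u hu.1 hu.2 0, p0, p1, p2] at r
      exact r.symm
    refine solve H1 ?_ ?_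
    · intro a b hab
      linear_combination low a b hab 0 - low a b hab 1
    · intro a b hab
      linear_combination - low a b hab 0
  · rintro ⟨z2, z3, k1, hk1, k0, hf⟩ u hu hu' x
    obtain ⟨c1, c2⟩ := verify hk1 hf
    rw [euler_low H1 H2 H3 hk z2 z3 ⟨hu, hu'⟩ x, c1 _ _ (hu' x)]
    linear_combination - c2 _ _ (hu' x)

end
end
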